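/- arXiv:1609.00608 — 2 statements merged into one kernel-verified Lean document; each statement's English description precedes it below -/
import Mathlib

section
/- (Krein-type formula for canonical extensions) Let 𝔥 and 𝒢 be complex Hilbert spaces, let T be a linear operator in 𝔥 with domain dom T, let Γ₀, Γ₁ : dom T → 𝒢 be linear maps, and let B : 𝒢 → 𝒢 be an everywhere defined linear operator. Set A₀ := T↾ker Γ₀ and A_[B] := T↾{f ∈ dom T : Γ₀f + BΓ₁f = 0}, and let λ ∈ ℂ be such that A₀ − λ is a bijection from ker Γ₀ onto 𝔥. Then Γ₀ is injective on ker(T−λ); let γ(λ) denote the inverse of Γ₀↾ker(T−λ), defined on 𝒢_λ := Γ₀(ker(T−λ)), and set M(λ) := Γ₁ ∘ γ(λ) : 𝒢_λ → 𝒢. Then: (1) ker(A_[B] − λ) = { γ(λ)φ : φ ∈ 𝒢_λ, φ + BM(λ)φ = 0 }; in particular, λ is an eigenvalue of A_[B] if and only if φ + BM(λ)φ = 0 for some nonzero φ ∈ 𝒢_λ. (2) If f ∈ dom A_[B] and g := (T−λ)f, then f₀ := (A₀−λ)^{-1}g ∈ ker Γ₀, the element ψ := −Γ₀(f − f₀)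 belongs to 𝒢_λ and satisfies ψ + BM(λ)ψ = BΓ₁f₀, and f = f₀ − γ(λ)ψ; that is, the Krein-type resolvent formula (A_[B]−λ)^{-1}g = (A₀−λ)^{-1}g − γ(λ)(I + BM(λ))^{-1}BΓ₁(A₀−λ)^{-1}g holds on ran(A_[B]−λ) whenever λ is not an eigenvalue of A_[B]. -/
noncomputable section

/-!
A vector of `ker Γ₀ ∩ ker (T - λ)` is annihilated by `A₀ - λ`, hence zero, so the elements of
`ker (T - λ)` are parametrized through `γ(λ)` by their boundary values under `Γ₀`, and
`Γ₀ + B Γ₁` becomes `I + B M(λ)` in this parametrization.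
If `f` lies in the domain of `A_[B]` and `f₀ = (A₀ - λ)⁻¹ (T - λ) f`, then `f₀ - f = γ(λ) ψ` with
`ψ = -Γ₀ f = B Γ₁ f`, while `M(λ) ψ = Γ₁ f₀ - Γ₁ f`; applying `B` and adding `ψ` cancels `f`.
-/

section BoundaryMaps

variable {R E G G' : Type*} [CommRing R]
  [AddCommGroup E] [Module R E] [AddCommGroup G] [Module R G] [AddCommGroup G'] [Module R G']

/-- The kernel `ker (T - μ)` of a partially defined operator `T`, as a submodule of `T.domain`
rather than of `E`, so that boundary maps defined on `T.domain` apply to its elements. -/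
def partialEigenspace (T : E →ₗ.[R] E) (μ : R) : Submodule R T.domain :=
  LinearMap.eqLocus T.toFun (μ • T.domain.subtype)

/-- The domain `ker (Γ₀ + B Γ₁)` of the canonical extension `A_[B]`, as a submodule of the common
domain `D` of the boundary maps. -/
def canonicalDomain {D : Type*} [AddCommGroup D] [Module R D]
    (Γ₀ : D →ₗ[R] G) (Γ₁ : D →ₗ[R] G') (B : G' →ₗ[R] G) : Submodule R D :=
  LinearMap.ker (Γ₀ + B ∘ₗ Γ₁)

/-- The value `γ(μ)` of the `γ`-field: the inverse of `Γ₀` restricted to `ker (T - μ)`, as a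
partially defined map on `G` with domain `Γ₀ (ker (T - μ))`. It is meaningful only if `Γ₀` is
injective on `ker (T - μ)`. -/
def gammaField (T : E →ₗ.[R] E) (Γ₀ : T.domain →ₗ[R] G) (μ : R) : G →ₗ.[R] T.domain :=
  (Γ₀.toPMap (partialEigenspace T μ)).inverse

/-- The value `M(μ) = Γ₁ γ(μ)` of the Weyl function, with the same domain as `γ(μ)`. -/
def weylFunction (T : E →ₗ.[R] E) (Γ₀ : T.domain →ₗ[R] G) (Γ₁ : T.domain →ₗ[R] G') (μ : R) :
    G →ₗ.[R] G' :=
  Γ₁.compPMap (gammaField T Γ₀ μ)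

theorem mem_canonicalDomain {D : Type*} [AddCommGroup D] [Module R D]
    {Γ₀ : D →ₗ[R] G} {Γ₁ : D →ₗ[R] G'} {B : G' →ₗ[R] G} {f : D} :
    f ∈ canonicalDomain Γ₀ Γ₁ B ↔ Γ₀ f + B (Γ₁ f) = 0 :=
  Iff.rfl

variable {T : E →ₗ.[R] E} {Γ₀ : T.domain →ₗ[R] G} {Γ₁ : T.domain →ₗ[R] G'} {B : G' →ₗ[R] G}
  {μ : R}

theorem mem_partialEigenspace {f : T.domain} :
    f ∈ partialEigenspace T μ ↔ T f = μ • (f : E) :=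
  Iff.rfl

theorem sub_mem_partialEigenspace_iff {f g : T.domain} :
    f - g ∈ partialEigenspace T μ ↔ T f - μ • (f : E) = T g - μ • (g : E) := by
  rw [mem_partialEigenspace, T.map_sub, Submodule.coe_sub, smul_sub, sub_eq_sub_iff_sub_eq_sub]

theorem disjoint_partialEigenspace_ker_of_existsUnique
    (h : ∃! f : T.domain, Γ₀ f = 0 ∧ T f - μ • (f : E) = 0) :
    Disjoint (partialEigenspace T μ) (LinearMap.ker Γ₀) :=
  LinearMap.disjoint_ker.mpr fun _ hf hΓ ↦
    h.unique ⟨hΓ, sub_eq_zero.mpr hf⟩ ⟨map_zero Γ₀, by simp⟩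

section GammaField

variable (hΓ : Disjoint (partialEigenspace T μ) (LinearMap.ker Γ₀))
include hΓ

theorem mem_graph_gammaField_iff {φ : G} {h : T.domain} :
    (φ, h) ∈ (gammaField T Γ₀ μ).graph ↔ h ∈ partialEigenspace T μ ∧ Γ₀ h = φ := by
  have hker : LinearMap.ker (Γ₀.toPMap (partialEigenspace T μ)).toFun = ⊥ :=
    LinearMap.ker_eq_bot.mpr (LinearMap.disjoint_ker_iff_injOn.mp hΓ).injective
  rw [gammaField, LinearPMap.inverse_graph hker]
  simp

theorem gammaField_mem_partialEigenspace (φ : (gammaField T Γ₀ μ).domain) :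
    gammaField T Γ₀ μ φ ∈ partialEigenspace T μ :=
  ((mem_graph_gammaField_iff hΓ).mp ((gammaField T Γ₀ μ).mem_graph φ)).1

theorem apply_gammaField (φ : (gammaField T Γ₀ μ).domain) : Γ₀ (gammaField T Γ₀ μ φ) = φ :=
  ((mem_graph_gammaField_iff hΓ).mp ((gammaField T Γ₀ μ).mem_graph φ)).2

theorem exists_gammaField_eq {h : T.domain} (hh : h ∈ partialEigenspace T μ) :
    ∃ φ : (gammaField T Γ₀ μ).domain, (φ : G) = Γ₀ h ∧ gammaField T Γ₀ μ φ = h :=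
  (LinearPMap.mem_graph_iff _).mp ((mem_graph_gammaField_iff hΓ).mpr ⟨hh, rfl⟩)

theorem gammaField_eq_zero_iff {φ : (gammaField T Γ₀ μ).domain} :
    gammaField T Γ₀ μ φ = 0 ↔ (φ : G) = 0 := by
  refine ⟨fun h ↦ ?_, fun h ↦ ?_⟩
  · rw [← apply_gammaField hΓ φ, h, map_zero]
  · rw [Submodule.coe_eq_zero.mp h, LinearPMap.map_zero]

theorem gammaField_mem_canonicalDomain_iff {φ : (gammaField T Γ₀ μ).domain} :
    gammaField T Γ₀ μ φ ∈ canonicalDomain Γ₀ Γ₁ B ↔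
      (φ : G) + B (weylFunction T Γ₀ Γ₁ μ φ) = 0 := by
  rw [mem_canonicalDomain, apply_gammaField hΓ]
  rfl

theorem mem_canonicalDomain_inf_partialEigenspace_iff {f : T.domain} :
    f ∈ canonicalDomain Γ₀ Γ₁ B ⊓ partialEigenspace T μ ↔
      ∃ φ : (gammaField T Γ₀ μ).domain,
        (φ : G) + B (weylFunction T Γ₀ Γ₁ μ φ) = 0 ∧ gammaField T Γ₀ μ φ = f := by
  constructor
  · rintro ⟨hB, hT⟩
    obtain ⟨φ, -, rfl⟩ := exists_gammaField_eq hΓ hT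
    exact ⟨φ, (gammaField_mem_canonicalDomain_iff hΓ).mp hB, rfl⟩
  · rintro ⟨φ, hφ, rfl⟩
    exact ⟨(gammaField_mem_canonicalDomain_iff hΓ).mpr hφ, gammaField_mem_partialEigenspace hΓ φ⟩

theorem exists_eigenvector_canonicalDomain_iff :
    (∃ f : T.domain, (f : E) ≠ 0 ∧ f ∈ canonicalDomain Γ₀ Γ₁ B ⊓ partialEigenspace T μ) ↔
      ∃ φ : (gammaField T Γ₀ μ).domain,
        (φ : G) ≠ 0 ∧ (φ : G) + B (weylFunction T Γ₀ Γ₁ μ φ) = 0 := by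
  constructor
  · rintro ⟨f, hne, hf⟩
    obtain ⟨φ, hφ, rfl⟩ := (mem_canonicalDomain_inf_partialEigenspace_iff hΓ).mp hf
    exact ⟨φ, mt (gammaField_eq_zero_iff hΓ).mpr (mt Submodule.coe_eq_zero.mpr hne), hφ⟩
  · rintro ⟨φ, hne, hφ⟩
    exact ⟨gammaField T Γ₀ μ φ, mt Submodule.coe_eq_zero.mp (mt (gammaField_eq_zero_iff hΓ).mp hne),
      (mem_canonicalDomain_inf_partialEigenspace_iff hΓ).mpr ⟨φ, hφ, rfl⟩⟩

theorem exists_eq_sub_gammaField {f f₀ : T.domain} (hf : f ∈ canonicalDomain Γ₀ Γ₁ B)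
    (hf₀ : Γ₀ f₀ = 0) (hsub : f₀ - f ∈ partialEigenspace T μ) :
    ∃ ψ : (gammaField T Γ₀ μ).domain, (ψ : G) = -Γ₀ (f - f₀) ∧
      (ψ : G) + B (weylFunction T Γ₀ Γ₁ μ ψ) = B (Γ₁ f₀) ∧ f = f₀ - gammaField T Γ₀ μ ψ := by
  obtain ⟨ψ, hψ, hγ⟩ := exists_gammaField_eq hΓ hsub
  have hψB : (ψ : G) = B (Γ₁ f) := by
    rw [hψ, map_sub, hf₀, zero_sub, neg_eq_of_add_eq_zero_right (mem_canonicalDomain.mp hf)]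
  have hM : weylFunction T Γ₀ Γ₁ μ ψ = Γ₁ f₀ - Γ₁ f :=
    (congrArg Γ₁ hγ).trans (map_sub Γ₁ f₀ f)
  refine ⟨ψ, by rw [hψ, ← map_neg, neg_sub], ?_, by rw [hγ, sub_sub_cancel]⟩
  rw [hψB, hM, map_sub, add_sub_cancel]

theorem exists_gammaField_iff {P : G → T.domain → Prop} :
    (∃ φ : (gammaField T Γ₀ μ).domain, P φ (gammaField T Γ₀ μ φ)) ↔
      ∃ φ h, T h = μ • (h : E) ∧ Γ₀ h = φ ∧ P φ h := by
  simp only [← and_assoc, ← mem_partialEigenspace, ← mem_graph_gammaField_iff hΓ]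
  simp

end GammaField

theorem krein_type_formula_general
    (T : E →ₗ.[R] E) (Γ₀ : T.domain →ₗ[R] G) (Γ₁ : T.domain →ₗ[R] G') (B : G' →ₗ[R] G) (μ : R)
    (hΓ : Disjoint (partialEigenspace T μ) (LinearMap.ker Γ₀)) :
    (∀ f g : T.domain, T f = μ • (f : E) → T g = μ • (g : E) → Γ₀ f = Γ₀ g → f = g) ∧
    ({x : E | ∃ f : T.domain, (f : E) = x ∧ Γ₀ f + B (Γ₁ f) = 0 ∧ T f = μ • (f : E)} =
      {x : E | ∃ φ : G, ∃ h : T.domain, T h = μ • (h : E) ∧ Γ₀ h = φ ∧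
        φ + B (Γ₁ h) = 0 ∧ (h : E) = x}) ∧
    ((∃ f : T.domain, (f : E) ≠ 0 ∧ Γ₀ f + B (Γ₁ f) = 0 ∧ T f = μ • (f : E)) ↔
      (∃ φ : G, φ ≠ 0 ∧ ∃ h : T.domain, T h = μ • (h : E) ∧ Γ₀ h = φ ∧
        φ + B (Γ₁ h) = 0)) ∧
    (∀ f : T.domain, Γ₀ f + B (Γ₁ f) = 0 →
      ∀ f₀ : T.domain, Γ₀ f₀ = 0 → T f₀ - μ • (f₀ : E) = T f - μ • (f : E) →
        ∃ h : T.domain, T h = μ • (h : E) ∧ Γ₀ h = -Γ₀ (f - f₀) ∧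
          Γ₀ h + B (Γ₁ h) = B (Γ₁ f₀) ∧ (f : E) = (f₀ : E) - (h : E)) := by
  refine ⟨fun f g hf hg ↦ LinearMap.disjoint_ker_iff_injOn.mp hΓ
    (mem_partialEigenspace.mpr hf) (mem_partialEigenspace.mpr hg), ?_, ?_, ?_⟩
  · ext x
    calc (∃ f : T.domain, (f : E) = x ∧ f ∈ canonicalDomain Γ₀ Γ₁ B ⊓ partialEigenspace T μ)
        ↔ ∃ φ : (gammaField T Γ₀ μ).domain,
            (φ : G) + B (weylFunction T Γ₀ Γ₁ μ φ) = 0 ∧ (gammaField T Γ₀ μ φ : E) = x := by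
          grind [mem_canonicalDomain_inf_partialEigenspace_iff hΓ]
      _ ↔ _ := exists_gammaField_iff hΓ (P := fun φ h ↦ φ + B (Γ₁ h) = 0 ∧ (h : E) = x)
  · calc (∃ f : T.domain, (f : E) ≠ 0 ∧ Γ₀ f + B (Γ₁ f) = 0 ∧ T f = μ • (f : E))
        ↔ ∃ φ : (gammaField T Γ₀ μ).domain,
            (φ : G) ≠ 0 ∧ (φ : G) + B (weylFunction T Γ₀ Γ₁ μ φ) = 0 :=
          exists_eigenvector_canonicalDomain_iff hΓ
      _ ↔ ∃ φ h, T h = μ • (h : E) ∧ Γ₀ h = φ ∧ φ ≠ 0 ∧ φ + B (Γ₁ h) = 0 :=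
          exists_gammaField_iff hΓ (P := fun φ h ↦ φ ≠ 0 ∧ φ + B (Γ₁ h) = 0)
      _ ↔ _ := by grind
  · intro f hf f₀ hf₀ hT
    obtain ⟨ψ, hψ, hM, rfl⟩ :=
      exists_eq_sub_gammaField hΓ hf hf₀ (sub_mem_partialEigenspace_iff.mpr hT)
    exact ⟨gammaField T Γ₀ μ ψ, mem_partialEigenspace.mp (gammaField_mem_partialEigenspace hΓ ψ),
      (apply_gammaField hΓ ψ).trans hψ, by rwa [apply_gammaField hΓ], rfl⟩

end BoundaryMaps

/-- **Theorem 2.4 (Krein-type formula for canonical extensions).**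
Here `A₀ = T ↾ ker Γ₀`, `A_[B] = T ↾ ker(Γ₀ + BΓ₁)`, and `λ ∈ ℂ` is such that
`A₀ - λ` is a bijection from `ker Γ₀` onto `𝔥` (hypothesis `hbij`). The value
`γ(λ)φ` for `φ ∈ 𝒢_λ := Γ₀(ker(T - λ))` is the unique `h ∈ ker(T - λ)` with
`Γ₀ h = φ`, and `M(λ)φ = Γ₁ h`. -/
theorem krein_type_formula
    {H G : Type*}
    [NormedAddCommGroup H] [InnerProductSpace ℂ H] [CompleteSpace H]
    [NormedAddCommGroup G] [InnerProductSpace ℂ G] [CompleteSpace G]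
    (T : H →ₗ.[ℂ] H) (Γ₀ Γ₁ : T.domain →ₗ[ℂ] G) (B : G →ₗ[ℂ] G) (lam : ℂ)
    (hbij : ∀ g : H, ∃! f : T.domain, Γ₀ f = 0 ∧ T f - lam • (f : H) = g) :
    -- `Γ₀` is injective on `ker(T - λ)`, so that `γ(λ)` is well defined
    (∀ f g : T.domain, T f = lam • (f : H) → T g = lam • (g : H) →
      Γ₀ f = Γ₀ g → f = g) ∧
    -- (1) `ker(A_[B] - λ) = { γ(λ)φ : φ ∈ 𝒢_λ, φ + BM(λ)φ = 0 }`
    ({x : H | ∃ f : T.domain, (f : H) = x ∧ Γ₀ f + B (Γ₁ f) = 0 ∧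
        T f = lam • (f : H)} =
      {x : H | ∃ φ : G, ∃ h : T.domain, T h = lam • (h : H) ∧ Γ₀ h = φ ∧
        φ + B (Γ₁ h) = 0 ∧ (h : H) = x}) ∧
    -- in particular, `λ` is an eigenvalue of `A_[B]` iff `φ + BM(λ)φ = 0`
    -- for some nonzero `φ ∈ 𝒢_λ`
    ((∃ f : T.domain, (f : H) ≠ 0 ∧ Γ₀ f + B (Γ₁ f) = 0 ∧ T f = lam • (f : H)) ↔
      (∃ φ : G, φ ≠ 0 ∧ ∃ h : T.domain, T h = lam • (h : H) ∧ Γ₀ h = φ ∧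
        φ + B (Γ₁ h) = 0)) ∧
    -- (2) the Krein-type resolvent formula: if `f ∈ dom A_[B]`, `g = (T - λ)f` and
    -- `f₀ = (A₀ - λ)⁻¹ g`, then `h := γ(λ)ψ` with `ψ := -Γ₀(f - f₀)` lies in
    -- `ker(T - λ)`, satisfies `ψ + BM(λ)ψ = BΓ₁ f₀`, and `f = f₀ - γ(λ)ψ`
    (∀ f : T.domain, Γ₀ f + B (Γ₁ f) = 0 →
      ∀ f₀ : T.domain, Γ₀ f₀ = 0 → T f₀ - lam • (f₀ : H) = T f - lam • (f : H) →
        ∃ h : T.domain, T h = lam • (h : H) ∧ Γ₀ h = -Γ₀ (f - f₀) ∧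
          Γ₀ h + B (Γ₁ h) = B (Γ₁ f₀) ∧ (f : H) = (f₀ : H) - (h : H)) :=
  krein_type_formula_general T Γ₀ Γ₁ B lam (disjoint_partialEigenspace_ker_of_existsUnique (hbij 0))
end
end

section
/- Let m > 0 and λ ∈ ℂ∖ℝ. Then there exist constants κ, κ', R > 0 and c₀ > 0 such that for all c ≥ c₀ one has (λ + mc²)²/c² − (mc)² = λ²/c² + 2mλ ∉ [0,∞) (so that G_{λ+mc²} is defined), and for all x ∈ ℝ³∖{0}: |G_{λ+mc²}(x) − K_λ(x)·P₊| ≤ (κ/c)|x|^{-2} if |x| < R, and |G_{λ+mc²}(x) − K_λ(x)·P₊| ≤ (κ/c)e^{-κ'|x|} if |x| ≥ R. -/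
noncomputable section

open MeasureTheory Complex Matrix
open scoped ENNReal

/-- The action of a complex `n × n` matrix on Euclidean space `ℂⁿ`. -/
def opApply {n : ℕ} (A : Matrix (Fin n) (Fin n) ℂ) :
    EuclideanSpace ℂ (Fin n) →L[ℂ] EuclideanSpace ℂ (Fin n) :=
  Matrix.toEuclideanCLM (𝕜 := ℂ) A

/-- The ℓ²-operator norm of a complex matrix, `|A|` in the paper. -/
def matNorm {n : ℕ} (A : Matrix (Fin n) (Fin n) ℂ) : ℝ := ‖opApply A‖

/-- Euclidean space `ℝ³`. -/
abbrev E3 := EuclideanSpace ℝ (Fin 3)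

/-- `4 × 4` complex matrices. -/
abbrev M4 := Matrix (Fin 4) (Fin 4) ℂ

/-- The Dirac matrix `α₁ = [[0, σ₁], [σ₁, 0]]`. -/
def alpha1 : M4 := !![0,0,0,1; 0,0,1,0; 0,1,0,0; 1,0,0,0]

/-- The Dirac matrix `α₂ = [[0, σ₂], [σ₂, 0]]`. -/
def alpha2 : M4 := !![0,0,0,-I; 0,0,I,0; 0,-I,0,0; I,0,0,0]

/-- The Dirac matrix `α₃ = [[0, σ₃], [σ₃, 0]]`. -/
def alpha3 : M4 := !![0,0,1,0; 0,0,0,-1; 1,0,0,0; 0,-1,0,0]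

/-- The Dirac matrix `β = [[I₂, 0], [0, -I₂]]`. -/
def betaM : M4 := !![1,0,0,0; 0,1,0,0; 0,0,-1,0; 0,0,0,-1]

/-- `α · x = x₁α₁ + x₂α₂ + x₃α₃`. -/
def alphaDot (x : E3) : M4 :=
  (x 0 : ℂ) • alpha1 + (x 1 : ℂ) • alpha2 + (x 2 : ℂ) • alpha3

/-- The integral kernel `G_λ` of the resolvent of the free Dirac operator, where `w`
is the square root of `λ²/c² - (mc)²` with positive imaginary part:
`G_λ(x) = ( (λ/c²)I₄ + mβ + (1 - i w|x|) i(α·x)/(c|x|²) ) e^{i w|x|}/(4π|x|)`. -/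
def Gker (m c : ℝ) (lam w : ℂ) (x : E3) : M4 :=
  (Complex.exp (I * w * (‖x‖ : ℂ)) / ((4 * Real.pi * ‖x‖ : ℝ) : ℂ)) •
    ((lam / (c : ℂ) ^ 2) • (1 : M4) + (m : ℂ) • betaM +
      (((1 : ℂ) - I * w * (‖x‖ : ℂ)) * I / ((c : ℂ) * (‖x‖ : ℂ) ^ 2)) • alphaDot x)

/-- The projection `P₊ = [[I₂, 0], [0, 0]]` onto the upper two components. -/
def Pplus : M4 := !![1,0,0,0; 0,1,0,0; 0,0,0,0; 0,0,0,0]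

/-- The matrix `K_λ(x)·P₊` where `K_λ(x) = 2m e^{i√(2mλ)|x|}/(4π|x|)` and `wK` is the
square root of `2mλ` with positive imaginary part. -/
def KP (m : ℝ) (wK : ℂ) (x : E3) : M4 :=
  (2 * (m : ℂ) * Complex.exp (I * wK * (‖x‖ : ℂ)) / ((4 * Real.pi * ‖x‖ : ℝ) : ℂ)) • Pplus

/-!
With `β = 2P₊ - 1` the rest energy turns the constant part of `G_{λ+mc²}` into `λ/c² + 2mP₊`, so
`G_{λ+mc²} - K_λ P₊` consists of two terms carrying explicit negative powers of `c` and of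
`2m (e^{iw|x|} - e^{iv|x|}) P₊ / (4π|x|)`, where `v² = 2mλ` and `w² = v² + λ²/c²`.  From
`(w - v)(w + v) = λ²/c²` and `Im (w + v) ≥ Im v > 0` one gets `w - v = O(1/c)`.  Once
`|w - v| ≤ Im v / 2`, both exponentials decay like `e^{-|x| Im v / 2}` and the mean value inequality
bounds their difference.  The same factorization shows that `v²` has distance at least `(Im v)²`
from `[0, ∞)`, so `w²` stays off the half line.
-/

open scoped Matrix.Norms.L2Operator

lemma matNorm_eq_norm {n : ℕ} (A : Matrix (Fin n) (Fin n) ℂ) : matNorm A = ‖A‖ := rfl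

section DiracMatrices

lemma betaM_eq : betaM = (2 : ℂ) • Pplus - 1 := by
  ext i j
  fin_cases i <;> fin_cases j <;> norm_num [betaM, Pplus, Matrix.one_apply]

lemma Pplus_eq_diagonal : Pplus = diagonal ![1, 1, 0, 0] := by
  ext i j
  fin_cases i <;> fin_cases j <;> rfl

lemma norm_Pplus : ‖Pplus‖ = 1 := by
  rw [Pplus_eq_diagonal, l2_opNorm_diagonal]
  refine le_antisymm ((pi_norm_le_iff_of_nonneg zero_le_one).2 fun i ↦ ?_) ?_
  · fin_cases i <;> simp
  · simpa using norm_le_pi_norm (![1, 1, 0, 0] : Fin 4 → ℂ) 0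

lemma alphaDot_isHermitian (x : E3) : (alphaDot x).IsHermitian := by
  ext i j
  fin_cases i <;> fin_cases j <;> simp [alphaDot, alpha1, alpha2, alpha3]

lemma alpha1_mul_self : alpha1 * alpha1 = 1 := by
  ext i j
  fin_cases i <;> fin_cases j <;> simp [alpha1, Matrix.mul_apply, Fin.sum_univ_four]

lemma alpha2_mul_self : alpha2 * alpha2 = 1 := by
  ext i j
  fin_cases i <;> fin_cases j <;> simp [alpha2, Matrix.mul_apply, Fin.sum_univ_four]

lemma alpha3_mul_self : alpha3 * alpha3 = 1 := by
  ext i j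
  fin_cases i <;> fin_cases j <;> simp [alpha3, Matrix.mul_apply, Fin.sum_univ_four]

lemma alpha1_mul_alpha2 : alpha1 * alpha2 = -(alpha2 * alpha1) := by
  ext i j
  fin_cases i <;> fin_cases j <;> simp [alpha1, alpha2, Matrix.mul_apply, Fin.sum_univ_four]

lemma alpha1_mul_alpha3 : alpha1 * alpha3 = -(alpha3 * alpha1) := by
  ext i j
  fin_cases i <;> fin_cases j <;> simp [alpha1, alpha3, Matrix.mul_apply, Fin.sum_univ_four]

lemma alpha2_mul_alpha3 : alpha2 * alpha3 = -(alpha3 * alpha2) := by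
  ext i j
  fin_cases i <;> fin_cases j <;> simp [alpha2, alpha3, Matrix.mul_apply, Fin.sum_univ_four]

lemma alphaDot_mul_self (x : E3) : alphaDot x * alphaDot x = ((‖x‖ : ℂ) ^ 2) • (1 : M4) := by
  have hx : (‖x‖ : ℂ) ^ 2 = (x 0 : ℂ) ^ 2 + (x 1 : ℂ) ^ 2 + (x 2 : ℂ) ^ 2 := by
    exact_mod_cast (EuclideanSpace.real_norm_sq_eq x).trans (Fin.sum_univ_three _)
  simp only [alphaDot, add_mul, mul_add, smul_mul_smul_comm, alpha1_mul_self, alpha2_mul_self,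
    alpha3_mul_self, alpha1_mul_alpha2, alpha1_mul_alpha3, alpha2_mul_alpha3, hx]
  module

lemma norm_alphaDot (x : E3) : ‖alphaDot x‖ = ‖x‖ := by
  refine (mul_self_inj (norm_nonneg _) (norm_nonneg _)).1 ?_
  rw [← l2_opNorm_conjTranspose_mul_self, (alphaDot_isHermitian x).eq, alphaDot_mul_self, norm_smul,
    CStarRing.norm_one, mul_one, norm_pow, norm_real, norm_norm, sq]

end DiracMatrices

section SquareRoots

lemma existsUnique_sq_eq_and_im_pos {z : ℂ} (hz : ¬ ∃ r : ℝ, 0 ≤ r ∧ z = (r : ℂ)) :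
    ∃! v : ℂ, v ^ 2 = z ∧ 0 < v.im := by
  obtain ⟨v, rfl⟩ := IsAlgClosed.exists_pow_nat_eq z two_pos
  have him : v.im ≠ 0 := fun h ↦ hz ⟨v.re ^ 2, sq_nonneg _, by
    rw [ofReal_pow, conj_eq_iff_re.1 (conj_eq_iff_im.2 h)]⟩
  have huniq {u u' : ℂ} (hu : 0 < u.im) (hu' : 0 < u'.im) (h : u' ^ 2 = u ^ 2) : u' = u :=
    (sq_eq_sq_iff_eq_or_eq_neg.1 h).resolve_right fun hneg ↦ by
      rw [hneg, neg_im] at hu'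
      linarith
  rcases him.lt_or_gt with hneg | hpos
  · have hpos : 0 < (-v).im := neg_pos.2 hneg
    exact ⟨-v, ⟨neg_sq v, hpos⟩, fun u hu ↦ huniq hpos hu.2 (hu.1.trans (neg_sq v).symm)⟩
  · exact ⟨v, ⟨rfl, hpos⟩, fun u hu ↦ huniq hpos hu.2 hu.1⟩

lemma norm_sub_mul_add_im_le (w v : ℂ) : ‖w - v‖ * (w + v).im ≤ ‖w ^ 2 - v ^ 2‖ := by
  rw [sq_sub_sq, norm_mul, mul_comm]
  gcongr
  exact (le_abs_self _).trans (abs_im_le_norm _)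

lemma norm_sub_le_div_im {v w : ℂ} (hv : 0 < v.im) (hw : 0 ≤ w.im) :
    ‖w - v‖ ≤ ‖w ^ 2 - v ^ 2‖ / v.im := by
  refine (le_div_iff₀ hv).2 (le_trans ?_ (norm_sub_mul_add_im_le w v))
  gcongr
  simpa using hw

lemma half_im_le_im_of_norm_sub_le {v w : ℂ} (h : ‖w - v‖ ≤ v.im / 2) : v.im / 2 ≤ w.im := by
  linarith [neg_abs_le (w - v).im, abs_im_le_norm (w - v), sub_im w v]

lemma im_sq_le_norm_ofReal_sub_sq (v : ℂ) {r : ℝ} (hr : 0 ≤ r) :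
    v.im ^ 2 ≤ ‖(r : ℂ) - v ^ 2‖ := by
  have hsub : |v.im| ≤ ‖(√r : ℂ) - v‖ := by simpa using abs_im_le_norm ((√r : ℂ) - v)
  have hadd : |v.im| ≤ ‖(√r : ℂ) + v‖ := by simpa using abs_im_le_norm ((√r : ℂ) + v)
  calc v.im ^ 2 = |v.im| * |v.im| := by rw [← sq, sq_abs]
    _ ≤ ‖(√r : ℂ) + v‖ * ‖(√r : ℂ) - v‖ := by gcongr
    _ = ‖(r : ℂ) - v ^ 2‖ := by rw [← norm_mul, ← sq_sub_sq, ← ofReal_pow, Real.sq_sqrt hr]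

end SquareRoots

section Exponentials

lemma norm_exp_sub_exp_le_of_re_le {a : ℝ} {z w : ℂ} (hz : z.re ≤ a) (hw : w.re ≤ a) :
    ‖exp z - exp w‖ ≤ Real.exp a * ‖z - w‖ := by
  refine (convex_halfSpace_re_le a).norm_image_sub_le_of_norm_hasDerivWithin_le
    (fun u _ ↦ (hasDerivAt_exp u).hasDerivWithinAt) (fun u hu ↦ ?_) hw hz
  rw [norm_exp]
  exact Real.exp_le_exp.2 hu

lemma re_I_mul_mul_ofReal_le {s r : ℝ} {w : ℂ} (hw : s ≤ w.im) (hr : 0 ≤ r) :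
    (I * w * (r : ℂ)).re ≤ -(s * r) := by
  simpa using mul_le_mul_of_nonneg_right hw hr

lemma norm_exp_I_mul_mul_ofReal_le {s r : ℝ} {w : ℂ} (hw : s ≤ w.im) (hr : 0 ≤ r) :
    ‖exp (I * w * (r : ℂ))‖ ≤ Real.exp (-(s * r)) := by
  rw [norm_exp]
  exact Real.exp_le_exp.2 (re_I_mul_mul_ofReal_le hw hr)

lemma norm_exp_I_mul_mul_ofReal_sub_le {s r : ℝ} {w v : ℂ} (hw : s ≤ w.im) (hv : s ≤ v.im)
    (hr : 0 ≤ r) :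
    ‖exp (I * w * (r : ℂ)) - exp (I * v * (r : ℂ))‖ ≤ Real.exp (-(s * r)) * (‖w - v‖ * r) := by
  refine (norm_exp_sub_exp_le_of_re_le (re_I_mul_mul_ofReal_le hw hr)
    (re_I_mul_mul_ofReal_le hv hr)).trans_eq ?_
  rw [← sub_mul, ← mul_sub, norm_mul, norm_mul, norm_I, one_mul, norm_real, Real.norm_of_nonneg hr]

end Exponentials

section Kernels

lemma sq_add_rest_energy_div_sub (m : ℝ) {c : ℝ} (hc : c ≠ 0) (lam : ℂ) :
    (lam + ((m * c ^ 2 : ℝ) : ℂ)) ^ 2 / (c : ℂ) ^ 2 - ((m * c : ℝ) : ℂ) ^ 2 =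
      lam ^ 2 / (c : ℂ) ^ 2 + 2 * (m : ℂ) * lam := by
  have hc' : (c : ℂ) ≠ 0 := ofReal_ne_zero.2 hc
  push_cast
  field_simp
  ring

lemma norm_sq_div_sq_le {c : ℝ} (hc : 1 ≤ c) (z : ℂ) : ‖z ^ 2 / (c : ℂ) ^ 2‖ ≤ ‖z‖ ^ 2 / c := by
  rw [norm_div, norm_pow, norm_pow, norm_real, Real.norm_of_nonneg (zero_le_one.trans hc)]
  gcongr
  exact le_self_pow₀ hc two_ne_zero

lemma Gker_sub_KP (m : ℝ) {c : ℝ} (hc : c ≠ 0) (lam w v : ℂ) (x : E3) :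
    Gker m c (lam + ((m * c ^ 2 : ℝ) : ℂ)) w x - KP m v x =
      ((4 * Real.pi * ‖x‖ : ℝ) : ℂ)⁻¹ •
        (exp (I * w * (‖x‖ : ℂ)) • ((lam / (c : ℂ) ^ 2) • (1 : M4) +
            ((1 - I * w * (‖x‖ : ℂ)) * I / ((c : ℂ) * (‖x‖ : ℂ) ^ 2)) • alphaDot x) +
          (2 * (m : ℂ) * (exp (I * w * (‖x‖ : ℂ)) - exp (I * v * (‖x‖ : ℂ)))) • Pplus) := by
  have hμ : (lam + ((m * c ^ 2 : ℝ) : ℂ)) / (c : ℂ) ^ 2 = lam / (c : ℂ) ^ 2 + m := by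
    have hc' : (c : ℂ) ≠ 0 := ofReal_ne_zero.2 hc
    push_cast
    field_simp
  rw [Gker, KP, hμ, betaM_eq]
  module

lemma norm_coeff_smul_alphaDot_le {c : ℝ} (hc : 0 < c) (w : ℂ) (x : E3) :
    ‖((1 - I * w * (‖x‖ : ℂ)) * I / ((c : ℂ) * (‖x‖ : ℂ) ^ 2)) • alphaDot x‖ ≤
      (1 + ‖w‖ * ‖x‖) / (c * ‖x‖) := by
  have hlin : ‖1 - I * w * (‖x‖ : ℂ)‖ ≤ 1 + ‖w‖ * ‖x‖ := by
    simpa using norm_sub_le 1 (I * w * (‖x‖ : ℂ))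
  calc ‖((1 - I * w * (‖x‖ : ℂ)) * I / ((c : ℂ) * (‖x‖ : ℂ) ^ 2)) • alphaDot x‖
      = ‖1 - I * w * (‖x‖ : ℂ)‖ / (c * ‖x‖ ^ 2) * ‖x‖ := by
        simp [norm_smul, norm_alphaDot, abs_of_pos hc]
    _ = ‖1 - I * w * (‖x‖ : ℂ)‖ / (c * ‖x‖) := by field_simp
    _ ≤ (1 + ‖w‖ * ‖x‖) / (c * ‖x‖) := by gcongr

lemma norm_Gker_sub_KP_le (m : ℝ) {c s : ℝ} (hc : 0 < c) (lam : ℂ) {w v : ℂ} (hw : s ≤ w.im)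
    (hv : s ≤ v.im) (x : E3) :
    ‖Gker m c (lam + ((m * c ^ 2 : ℝ) : ℂ)) w x - KP m v x‖ ≤
      Real.exp (-(s * ‖x‖)) / (4 * Real.pi * ‖x‖) *
        (‖lam‖ / c ^ 2 + (1 + ‖w‖ * ‖x‖) / (c * ‖x‖) + 2 * |m| * (‖w - v‖ * ‖x‖)) := by
  set r := ‖x‖
  set e := Real.exp (-(s * r))
  have hr : 0 ≤ r := norm_nonneg x
  have hdirac : ‖(lam / (c : ℂ) ^ 2) • (1 : M4) +
      ((1 - I * w * (r : ℂ)) * I / ((c : ℂ) * (r : ℂ) ^ 2)) • alphaDot x‖ ≤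
      ‖lam‖ / c ^ 2 + (1 + ‖w‖ * r) / (c * r) := by
    refine norm_add_le_of_le (le_of_eq ?_) (norm_coeff_smul_alphaDot_le hc w x)
    simp [norm_smul]
  have hexp : ‖(2 * (m : ℂ) * (exp (I * w * (r : ℂ)) - exp (I * v * (r : ℂ)))) • Pplus‖ ≤
      2 * |m| * (e * (‖w - v‖ * r)) := by
    rw [norm_smul, norm_Pplus, mul_one, norm_mul, norm_mul, norm_real, Real.norm_eq_abs, norm_ofNat]
    gcongr
    exact norm_exp_I_mul_mul_ofReal_sub_le hw hv hr
  rw [Gker_sub_KP m hc.ne', norm_smul, norm_inv, norm_real, Real.norm_of_nonneg (by positivity)]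
  calc (4 * Real.pi * r)⁻¹ * _
      ≤ (4 * Real.pi * r)⁻¹ * (e * (‖lam‖ / c ^ 2 + (1 + ‖w‖ * r) / (c * r)) +
          2 * |m| * (e * (‖w - v‖ * r))) := by
        gcongr
        refine norm_add_le_of_le ?_ hexp
        rw [norm_smul]
        exact mul_le_mul (norm_exp_I_mul_mul_ofReal_le hw hr) hdirac (norm_nonneg _)
          (Real.exp_pos _).le
    _ = e / (4 * Real.pi * r) *
          (‖lam‖ / c ^ 2 + (1 + ‖w‖ * r) / (c * r) + 2 * |m| * (‖w - v‖ * r)) := by ring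

lemma norm_Gker_sub_KP_le_max (m : ℝ) {c s W D : ℝ} (hc : 1 ≤ c) (lam : ℂ) {w v : ℂ}
    (hw : s ≤ w.im) (hv : s ≤ v.im) (hW : ‖w‖ ≤ W) (hD : ‖w - v‖ ≤ D / c) {x : E3} (hx : x ≠ 0) :
    ‖Gker m c (lam + ((m * c ^ 2 : ℝ) : ℂ)) w x - KP m v x‖ ≤
      (‖lam‖ + W + 1 + 2 * |m| * D) / c *
        (Real.exp (-(s * ‖x‖)) * max 1 (‖x‖ ^ (-2 : ℝ))) := by
  refine (norm_Gker_sub_KP_le m (one_pos.trans_le hc) lam hw hv x).trans ?_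
  have hr : 0 < ‖x‖ := norm_pos_iff.2 hx
  have hc0 : 0 < c := one_pos.trans_le hc
  have hW0 : 0 ≤ W := (norm_nonneg w).trans hW
  have hD0 : 0 ≤ D := by
    simpa only [div_mul_cancel₀ D hc0.ne'] using mul_nonneg ((norm_nonneg _).trans hD) hc0.le
  set r := ‖x‖
  set e := Real.exp (-(s * r))
  set M := max 1 (r ^ (-2 : ℝ))
  have h1M : 1 ≤ M := le_max_left _ _
  have hsqM : r⁻¹ ^ 2 ≤ M := by
    rw [inv_pow, ← Real.rpow_two, ← Real.rpow_neg hr.le]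
    exact le_max_right _ _
  have hinvM : r⁻¹ ≤ M := by linarith [two_mul_le_add_sq r⁻¹ 1]
  calc e / (4 * Real.pi * r) *
        (‖lam‖ / c ^ 2 + (1 + ‖w‖ * r) / (c * r) + 2 * |m| * (‖w - v‖ * r))
      ≤ e / r * (‖lam‖ / c + (1 + W * r) / (c * r) + 2 * |m| * (D / c * r)) := by
        have hpi : r ≤ 4 * Real.pi * r := by nlinarith [Real.pi_gt_three]
        gcongr
        exact le_self_pow₀ hc two_ne_zero
    _ = e / c * (‖lam‖ * r⁻¹ + W * r⁻¹ + r⁻¹ ^ 2 + 2 * |m| * D * 1) := by field_simp; ring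
    _ ≤ e / c * (‖lam‖ * M + W * M + M + 2 * |m| * D * M) := by gcongr
    _ = (‖lam‖ + W + 1 + 2 * |m| * D) / c * (e * M) := by ring

lemma norm_Gker_sub_KP_le_of_sq_eq (m : ℝ) {c : ℝ} (hc : 1 ≤ c) {lam w v : ℂ}
    (hw : w ^ 2 = (lam + ((m * c ^ 2 : ℝ) : ℂ)) ^ 2 / (c : ℂ) ^ 2 - ((m * c : ℝ) : ℂ) ^ 2)
    (hwim : 0 ≤ w.im) (hv : v ^ 2 = 2 * (m : ℂ) * lam) (hvim : 0 < v.im)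
    (hsmall : ‖lam‖ ^ 2 / c ≤ v.im ^ 2 / 2) {x : E3} (hx : x ≠ 0) :
    ‖Gker m c (lam + ((m * c ^ 2 : ℝ) : ℂ)) w x - KP m v x‖ ≤
      (‖lam‖ + (‖v‖ + v.im / 2) + 1 + 2 * |m| * (‖lam‖ ^ 2 / v.im)) / c *
        (Real.exp (-(v.im / 2 * ‖x‖)) * max 1 (‖x‖ ^ (-2 : ℝ))) := by
  have hclose : ‖w - v‖ ≤ ‖lam‖ ^ 2 / c / v.im := calc
    ‖w - v‖ ≤ ‖w ^ 2 - v ^ 2‖ / v.im := norm_sub_le_div_im hvim hwim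
    _ = ‖lam ^ 2 / (c : ℂ) ^ 2‖ / v.im := by
      rw [hw, sq_add_rest_energy_div_sub m (one_pos.trans_le hc).ne', hv, add_sub_cancel_right]
    _ ≤ ‖lam‖ ^ 2 / c / v.im := by
      gcongr
      exact norm_sq_div_sq_le hc lam
  have hhalf : ‖w - v‖ ≤ v.im / 2 := hclose.trans <| by
    rw [div_le_iff₀ hvim]
    linarith
  exact norm_Gker_sub_KP_le_max m hc lam (half_im_le_im_of_norm_sub_le hhalf)
    (half_le_self hvim.le) ((norm_le_norm_add_norm_sub' w v).trans (by gcongr))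
    (hclose.trans_eq (div_right_comm _ _ _)) hx

lemma exp_neg_mul_max_le_rpow {s r : ℝ} (hs : 0 ≤ s) (hr : 0 < r) (hr1 : r ≤ 1) :
    Real.exp (-(s * r)) * max 1 (r ^ (-2 : ℝ)) ≤ r ^ (-2 : ℝ) := by
  rw [max_eq_right (Real.one_le_rpow_of_pos_of_le_one_of_nonpos hr hr1 (by norm_num))]
  exact mul_le_of_le_one_left (by positivity) (Real.exp_le_one_iff.2 (by nlinarith))

end Kernels

theorem nonrelativistic_kernel_bound_general (m : ℝ) (lam : ℂ)
    (hlam : ¬ ∃ r : ℝ, 0 ≤ r ∧ 2 * (m : ℂ) * lam = (r : ℂ)) :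
    ∃ κ κ' R c₀ : ℝ, 0 < κ ∧ 0 < κ' ∧ 0 < R ∧ 0 < c₀ ∧
      ∀ c : ℝ, c₀ ≤ c →
        (¬ ∃ r : ℝ, 0 ≤ r ∧ lam ^ 2 / (c : ℂ) ^ 2 + 2 * (m : ℂ) * lam = (r : ℂ)) ∧
        ∀ w wK : ℂ,
          w ^ 2 = (lam + ((m * c ^ 2 : ℝ) : ℂ)) ^ 2 / (c : ℂ) ^ 2 -
            ((m * c : ℝ) : ℂ) ^ 2 → 0 < w.im →
          wK ^ 2 = 2 * (m : ℂ) * lam → 0 < wK.im →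
          ∀ x : E3, x ≠ 0 →
            (‖x‖ < R →
              matNorm (Gker m c (lam + ((m * c ^ 2 : ℝ) : ℂ)) w x - KP m wK x) ≤
                κ / c * ‖x‖ ^ (-2 : ℝ)) ∧
            (R ≤ ‖x‖ →
              matNorm (Gker m c (lam + ((m * c ^ 2 : ℝ) : ℂ)) w x - KP m wK x) ≤
                κ / c * Real.exp (-(κ' * ‖x‖))) := by
  obtain ⟨v, ⟨hv, hvim⟩, hv_unique⟩ := existsUnique_sq_eq_and_im_pos hlam
  refine ⟨‖lam‖ + (‖v‖ + v.im / 2) + 1 + 2 * |m| * (‖lam‖ ^ 2 / v.im), v.im / 2, 1,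
    max 1 (2 * ‖lam‖ ^ 2 / v.im ^ 2), by positivity, by positivity, one_pos, by positivity,
    fun c hc ↦ ?_⟩
  have hc1 : 1 ≤ c := (le_max_left _ _).trans hc
  have hsmall : ‖lam‖ ^ 2 / c ≤ v.im ^ 2 / 2 := by
    have h := (le_max_right _ _).trans hc
    rw [div_le_iff₀ (by positivity)] at h ⊢
    linarith
  refine ⟨fun ⟨r, hr, h⟩ ↦ ?_, fun w wK hw hwim hwK hwKim x hx ↦ ?_⟩
  · have hdist := im_sq_le_norm_ofReal_sub_sq v hr
    rw [← h, hv, add_sub_cancel_right] at hdist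
    linarith [norm_sq_div_sq_le hc1 lam, pow_pos hvim 2]
  · obtain rfl := hv_unique wK ⟨hwK, hwKim⟩
    have hbound := norm_Gker_sub_KP_le_of_sq_eq m hc1 hw hwim.le hwK hwKim hsmall hx
    rw [matNorm_eq_norm]
    refine ⟨fun hnear ↦ hbound.trans ?_, fun hfar ↦ hbound.trans_eq ?_⟩
    · gcongr
      exact exp_neg_mul_max_le_rpow (by positivity) (norm_pos_iff.2 hx) hnear.le
    · rw [max_eq_left (Real.rpow_le_one_of_one_le_of_nonpos hfar (by norm_num)), mul_one]

/-- **Estimate (5.14).** Pointwise kernel bound in the nonrelativistic limit: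
`|G_{λ+mc²}(x) - K_λ(x)P₊| ≤ (κ/c)|x|⁻²` for `|x| < R` and `≤ (κ/c)e^{-κ'|x|}`
for `|x| ≥ R`, for all sufficiently large `c`. -/
theorem nonrelativistic_kernel_bound (m : ℝ) (hm : 0 < m) (lam : ℂ) (hlam : lam.im ≠ 0) :
    ∃ κ κ' R c₀ : ℝ, 0 < κ ∧ 0 < κ' ∧ 0 < R ∧ 0 < c₀ ∧
      ∀ c : ℝ, c₀ ≤ c →
        (¬ ∃ r : ℝ, 0 ≤ r ∧ lam ^ 2 / (c : ℂ) ^ 2 + 2 * (m : ℂ) * lam = (r : ℂ)) ∧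
        ∀ w wK : ℂ,
          w ^ 2 = (lam + ((m * c ^ 2 : ℝ) : ℂ)) ^ 2 / (c : ℂ) ^ 2 -
            ((m * c : ℝ) : ℂ) ^ 2 → 0 < w.im →
          wK ^ 2 = 2 * (m : ℂ) * lam → 0 < wK.im →
          ∀ x : E3, x ≠ 0 →
            (‖x‖ < R →
              matNorm (Gker m c (lam + ((m * c ^ 2 : ℝ) : ℂ)) w x - KP m wK x) ≤
                κ / c * ‖x‖ ^ (-2 : ℝ)) ∧
            (R ≤ ‖x‖ →
              matNorm (Gker m c (lam + ((m * c ^ 2 : ℝ) : ℂ)) w x - KP m wK x) ≤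
                κ / c * Real.exp (-(κ' * ‖x‖))) := by
  refine nonrelativistic_kernel_bound_general m lam fun ⟨r, _, hr⟩ ↦ ?_
  simpa [hm.ne', hlam] using congrArg im hr
end
end
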